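/- For all τ ∈ ℍ, the complex derivative of Δ satisfies Δ'(τ) = 2πi · E2(τ) · Δ(τ); that is, the logarithmic derivative of Δ equals 2πi E2. -/

import Mathlib

/-!
On the upper half-plane the series defining `Δfun` agree with Mathlib's Eisenstein series `E₄`
and `E₆`, so `Δfun = (E₄³ - E₆²) / 1728` is the modular discriminant `η ^ 24` (both are cusp forms
of weight 12 with the same leading coefficient, and that space is one-dimensional). The product
formula for `η` gives `η' / η = (πi / 12) E₂`, hence `(η ^ 24)' = 24 (πi / 12) E₂ η ^ 24`, which is
the claim.
-/

/-- `q = exp(2πiτ)`. -/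
noncomputable def qexp (τ : ℂ) : ℂ := Complex.exp (2 * Real.pi * Complex.I * τ)

/-- Divisor power sum `σ_k(n) = ∑_{d | n} d^k`, as a complex number. -/
noncomputable def sigmaC (k n : ℕ) : ℂ := ∑ d ∈ Nat.divisors n, (d : ℂ) ^ k

/-- Eisenstein series `E₂`. -/
noncomputable def E2 (τ : ℂ) : ℂ := 1 - 24 * ∑' n : ℕ, sigmaC 1 (n + 1) * qexp τ ^ (n + 1)

/-- Eisenstein series `E₄`. -/
noncomputable def E4 (τ : ℂ) : ℂ := 1 + 240 * ∑' n : ℕ, sigmaC 3 (n + 1) * qexp τ ^ (n + 1)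

/-- Eisenstein series `E₆`. -/
noncomputable def E6 (τ : ℂ) : ℂ := 1 - 504 * ∑' n : ℕ, sigmaC 5 (n + 1) * qexp τ ^ (n + 1)

/-- The discriminant form `Δ = (E₄³ - E₆²)/1728`. -/
noncomputable def Δfun (τ : ℂ) : ℂ := (E4 τ ^ 3 - E6 τ ^ 2) / 1728

/-- The ratio of quasi-periods `p(τ) = τ - 6i/(π E₂(τ))`. -/
noncomputable def pfun (τ : ℂ) : ℂ := τ - 6 * Complex.I / (Real.pi * E2 τ)

lemma sigmaC_eq_sigma (k n : ℕ) : sigmaC k n = (ArithmeticFunction.sigma k n : ℂ) := by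
  simp [sigmaC, ArithmeticFunction.sigma_apply]

/-- The series in `E2`, `E4`, `E6`, rewritten as a sum over positive integers in the form
used by Mathlib's `q`-expansions. -/
lemma tsum_sigmaC_eq (k : ℕ) (τ : ℂ) :
    ∑' n : ℕ, sigmaC k (n + 1) * qexp τ ^ (n + 1) =
      ∑' n : ℕ+, (ArithmeticFunction.sigma k n : ℂ) *
        Complex.exp (2 * Real.pi * Complex.I * τ) ^ (n : ℕ) := by
  rw [tsum_pnat_eq_tsum_succ (f := fun n : ℕ ↦ (ArithmeticFunction.sigma k n : ℂ) *
        Complex.exp (2 * Real.pi * Complex.I * τ) ^ n)]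
  simp only [sigmaC_eq_sigma, qexp]

lemma E2_eq_mathlib (z : UpperHalfPlane) : E2 z = EisensteinSeries.E2 z := by
  rw [E2, tsum_sigmaC_eq, EisensteinSeries.E2_eq_tsum_cexp]

lemma E4_eq_mathlib (z : UpperHalfPlane) : E4 z = ModularForm.E₄ z := by
  rw [E4, tsum_sigmaC_eq, EisensteinSeries.q_expansion_bernoulli _ ⟨2, rfl⟩,
    show bernoulli 4 = -1 / 30 by decide +kernel]
  norm_num

lemma E6_eq_mathlib (z : UpperHalfPlane) : E6 z = ModularForm.E₆ z := by
  rw [E6, tsum_sigmaC_eq, EisensteinSeries.q_expansion_bernoulli _ ⟨3, rfl⟩,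
    show bernoulli 6 = 1 / 42 by decide +kernel]
  norm_num

lemma Δfun_eq_eta_pow {τ : ℂ} (hτ : 0 < τ.im) : Δfun τ = ModularForm.eta τ ^ 24 := by
  have h := ModularForm.discriminant_eq_E₄_cube_sub_E₆_sq ⟨τ, hτ⟩
  rw [← E4_eq_mathlib, ← E6_eq_mathlib] at h
  exact h.symm

/-- The logarithmic derivative of `Δ` equals `2πi E₂`: `Δ' = 2πi E₂ Δ`. -/
theorem delta_log_derivative (τ : ℂ) (hτ : 0 < τ.im) :
    HasDerivAt Δfun (2 * Real.pi * Complex.I * E2 τ * Δfun τ) τ := by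
  have hη : ModularForm.eta τ ≠ 0 := ModularForm.eta_ne_zero hτ
  have hlog : deriv ModularForm.eta τ / ModularForm.eta τ = Real.pi * Complex.I / 12 * E2 τ :=
    (ModularForm.logDeriv_eta_eq_E2 ⟨τ, hτ⟩).trans
      (congrArg _ (E2_eq_mathlib ⟨τ, hτ⟩).symm)
  rw [div_eq_iff hη] at hlog
  have hd := (ModularForm.differentiableAt_eta_of_mem_upperHalfPlaneSet hτ).hasDerivAt.pow 24
  -- The identity with `η ^ 24` holds on the open half-plane, so it transfers the derivative.
  have heq : Δfun =ᶠ[nhds τ] ModularForm.eta ^ 24 := by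
    filter_upwards [UpperHalfPlane.isOpen_upperHalfPlaneSet.mem_nhds hτ] with w hw
    exact Δfun_eq_eta_pow hw
  refine (hd.congr_of_eventuallyEq heq).congr_deriv ?_
  rw [Δfun_eq_eta_pow hτ, hlog]
  push_cast
  ring
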